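/- Let A ∈ 𝓡 be a fixed set and let X^(1), X^(2) be (arbitrarily dependent) random vectors in [0,∞)^d with distributions F_1, F_2 respectively. Suppose F_2(xA)/F_1(xA) → c as x → ∞ for some constant c ∈ (0,∞). Then for each of the classes 𝓑 ∈ {𝓟𝓓, 𝓣, 𝓐, 𝓓 ∩ 𝓟𝓓, 𝓓 ∩ 𝓐}: if F_1 ∈ 𝓑_A then F_2 ∈ 𝓑_A. -/

import Mathlib

open MeasureTheory ProbabilityTheory Filter Topology
open scoped Pointwise

namespace Paper

variable {d : ℕ} {Ω : Type*} [MeasurableSpace Ω]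

/-- The family `𝓡` of open, increasing sets with convex complement, bounded away from `0`. -/
structure IsRSet (d : ℕ) (A : Set (Fin d → ℝ)) : Prop where
  isOpen : IsOpen A
  increasing : ∀ u ∈ A, ∀ v : Fin d → ℝ, (∀ i, 0 ≤ v i) → u + v ∈ A
  convex_compl : Convex ℝ Aᶜ
  zero_notMem_closure : (0 : Fin d → ℝ) ∉ closure A

/-- `Y_A(z) = sup { u > 0 : z ∈ u A }`. -/
noncomputable def suprA (A : Set (Fin d → ℝ)) (z : Fin d → ℝ) : ℝ :=
  sSup {u : ℝ | 0 < u ∧ z ∈ u • A}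

/-- `F_A`, the distribution of `Y_A = suprA A ∘ X` under `P`. -/
noncomputable def FA (P : Measure Ω) (A : Set (Fin d → ℝ)) (X : Ω → Fin d → ℝ) :
    Measure ℝ :=
  P.map (fun ω => suprA A (X ω))

/-- `F (x A) = P[X ∈ x A]` as a real number. -/
noncomputable def vTail (P : Measure Ω) (A : Set (Fin d → ℝ)) (X : Ω → Fin d → ℝ)
    (x : ℝ) : ℝ :=
  (P {ω | X ω ∈ x • A}).toReal

/-- Tail `ν(x, ∞)` of a measure on `ℝ`, as a real number. -/
noncomputable def mTail (ν : Measure ℝ) (x : ℝ) : ℝ := (ν (Set.Ioi x)).toReal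

/-- Convolution of two measures on `ℝ`. -/
noncomputable def mConv (μ ν : Measure ℝ) : Measure ℝ :=
  (μ.prod ν).map (fun p => p.1 + p.2)

/-- `n`-fold convolution power. -/
noncomputable def mConvN (ν : Measure ℝ) : ℕ → Measure ℝ
  | 0 => Measure.dirac 0
  | n + 1 => mConv (mConvN ν n) ν

/-- Long-tailed class `𝓛`. -/
def MemL (ν : Measure ℝ) : Prop :=
  ∀ a : ℝ, 0 < a → Tendsto (fun x => mTail ν (x - a) / mTail ν x) atTop (𝓝 1)

/-- Subexponential class `𝓢`. -/
def MemS (ν : Measure ℝ) : Prop :=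
  Tendsto (fun x => mTail (mConv ν ν) x / mTail ν x) atTop (𝓝 2)

/-- Dominatedly varying class `𝓓`. -/
def MemD (ν : Measure ℝ) : Prop :=
  ∀ y : ℝ, 0 < y → y < 1 → ∃ C : ℝ, ∀ᶠ x in atTop, mTail ν (y * x) / mTail ν x ≤ C

/-- Positively decreasing class `𝓟𝓓`. -/
def MemPD (ν : Measure ℝ) : Prop :=
  ∀ b : ℝ, 1 < b → ∃ c : ℝ, c < 1 ∧ ∀ᶠ x in atTop, mTail ν (b * x) / mTail ν x ≤ c

/-- Consistently varying class `𝓒`. -/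
def MemC (ν : Measure ℝ) : Prop :=
  Tendsto (fun b : ℝ => Filter.liminf (fun x => mTail ν (b * x) / mTail ν x) atTop)
    (nhdsWithin 1 (Set.Ioi 1)) (𝓝 1)

/-- `𝓐 = 𝓢 ∩ 𝓟𝓓`. -/
def MemA (ν : Measure ℝ) : Prop := MemS ν ∧ MemPD ν

/-- `𝓣 = 𝓛 ∩ 𝓟𝓓`. -/
def MemT (ν : Measure ℝ) : Prop := MemL ν ∧ MemPD ν

/-- Regular variation of index `-α` of the tail of `ν`. -/
def MemRV (ν : Measure ℝ) (α : ℝ) : Prop :=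
  ∀ t : ℝ, 0 < t → Tendsto (fun x => mTail ν (t * x) / mTail ν x) atTop (𝓝 (t ^ (-α)))

/-- Weak tail-equivalence `f ≍ g`. -/
def WeakTailEquiv (f g : ℝ → ℝ) : Prop :=
  ∃ c₁ c₂ : ℝ, 0 < c₁ ∧ ∀ᶠ x in atTop, c₁ * g x ≤ f x ∧ f x ≤ c₂ * g x

/-- (Standard) multivariate regular variation `F ∈ MRV(α, V, μ)` of the distribution of `X`. -/
structure IsMRV (P : Measure Ω) (X : Ω → Fin d → ℝ) (α : ℝ) (V : Measure ℝ)
    (μ : Measure (Fin d → ℝ)) : Prop where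
  alpha_pos : 0 < α
  V_prob : IsProbabilityMeasure V
  V_rv : MemRV V α
  mu_ne_zero : ∃ B : Set (Fin d → ℝ), (0 : Fin d → ℝ) ∉ closure B ∧ 0 < μ B
  mu_radon : ∀ B : Set (Fin d → ℝ), (0 : Fin d → ℝ) ∉ closure B → μ B ≠ ⊤
  tendsto : ∀ B : Set (Fin d → ℝ), MeasurableSet B → (0 : Fin d → ℝ) ∉ closure B →
    μ (frontier B) = 0 →
    Tendsto (fun x => vTail P B X x / mTail V x) atTop (𝓝 ((μ B).toReal))

/-- Support of a distribution on `ℝ`. -/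
def measSupport (ν : Measure ℝ) : Set ℝ := {t | ∀ U ∈ 𝓝 t, 0 < ν U}

/-- Assumption `CD_A`: conditional dependence of `(X, Θ)` on `A` with transfer function `h`:
`P[Y_A > x | Θ = t] ~ h(t) P[Y_A > x]` uniformly on the support of the distribution of `Θ`. -/
def CDA (P : Measure Ω) [IsFiniteMeasure P] (A : Set (Fin d → ℝ))
    (X : Ω → Fin d → ℝ) (Θ : Ω → ℝ) (h : ℝ → ℝ) : Prop :=
  ∀ ε : ℝ, 0 < ε → ∀ᶠ x in atTop, ∀ t ∈ measSupport (P.map Θ),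
    |((condDistrib (fun ω => suprA A (X ω)) Θ P) t (Set.Ioi x)).toReal /
        (h t * (P {ω | x < suprA A (X ω)}).toReal) - 1| ≤ ε

/-- Assumption `B_A`: `P[Θ > c x] = o(P[Θ Y_A > x])` for all `c > 0`. -/
def BA (P : Measure Ω) (A : Set (Fin d → ℝ)) (X : Ω → Fin d → ℝ) (Θ : Ω → ℝ) : Prop :=
  ∀ c : ℝ, 0 < c →
    Tendsto (fun x => (P {ω | c * x < Θ ω}).toReal /
      (P {ω | x < Θ ω * suprA A (X ω)}).toReal) atTop (𝓝 0)

/-- Assumption `B_A` in the form `P[Θ > c x] = o(P[Θ X ∈ x A])` for all `c > 0`. -/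
def BA' (P : Measure Ω) (A : Set (Fin d → ℝ)) (X : Ω → Fin d → ℝ) (Θ : Ω → ℝ) : Prop :=
  ∀ c : ℝ, 0 < c →
    Tendsto (fun x => (P {ω | c * x < Θ ω}).toReal /
      (P {ω | Θ ω • X ω ∈ x • A}).toReal) atTop (𝓝 0)

/-!
Since the complement of `A` is star-shaped about the origin, `Y_A > x` if and only if `X ∈ x A`, so
the hypothesis says that the tails of `F_A` for the two vectors have ratio tending to `c`, and
everything happens on the real line. If `ν(x, ∞) / μ(x, ∞) → c ≠ 0`, then the ratios
`ν(φ x, ∞) / ν(x, ∞)` and `μ(φ x, ∞) / μ(x, ∞)` are asymptotically equivalent for every `φ` tending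
to infinity, which settles the classes `𝓛`, `𝓓` and `𝓟𝓓`. For `𝓢` we use that a law on `[0, ∞)` is
subexponential if and only if it is long-tailed and a large sum of two independent copies has only
one large summand. By Fubini, the probability that both summands are large is controlled by the
tail alone, so this last property only depends on the tail up to constant factors.
-/

section SmulSet

variable {E : Type*} [AddCommGroup E] [Module ℝ E] {A : Set E}

lemma smul_set_subset_of_starConvex_compl (hA : StarConvex ℝ 0 Aᶜ) {x u : ℝ} (hx : 0 < x)
    (hxu : x ≤ u) : u • A ⊆ x • A := by
  rintro _ ⟨a, ha, rfl⟩
  have hu : 0 < u := hx.trans_le hxu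
  rw [Set.mem_smul_set_iff_inv_smul_mem₀ hx.ne']
  by_contra hmem
  refine hA.smul_mem hmem (div_nonneg hx.le hu.le) ((div_le_one hu).2 hxu) ?_
  have hscale : x / u * (x⁻¹ * u) = 1 := by field_simp
  simpa only [smul_smul, hscale, one_smul] using ha

variable [TopologicalSpace E] [ContinuousSMul ℝ E]

lemma bddAbove_setOf_mem_smul_set (hA : (0 : E) ∉ closure A) (z : E) :
    BddAbove {u : ℝ | 0 < u ∧ z ∈ u • A} := by
  have hlim : Tendsto (fun u : ℝ => u⁻¹ • z) atTop (𝓝 0) := by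
    simpa only [zero_smul] using (tendsto_inv_atTop_zero (𝕜 := ℝ)).smul_const z
  have hnhds : ∀ᶠ y in 𝓝 (0 : E), y ∉ A := by
    simpa only [mem_closure_iff_frequently, not_frequently] using hA
  obtain ⟨N, hN⟩ := eventually_atTop.1 (hlim.eventually hnhds)
  refine ⟨N, fun u ⟨hu, hzu⟩ => le_of_not_ge fun hNu => hN u hNu ?_⟩
  exact (Set.mem_smul_set_iff_inv_smul_mem₀ hu.ne' A z).1 hzu

lemma exists_gt_mem_smul_set (hA : IsOpen A) {z : E} {x : ℝ} (hx : 0 < x) (hz : z ∈ x • A) :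
    ∃ u, x < u ∧ z ∈ u • A := by
  rw [Set.mem_smul_set_iff_inv_smul_mem₀ hx.ne'] at hz
  have hcont : ContinuousAt (fun u : ℝ => u⁻¹ • z) x :=
    (continuousAt_inv₀ hx.ne').smul continuousAt_const
  have hnear : ∀ᶠ u in 𝓝[>] x, u⁻¹ • z ∈ A :=
    (hcont.eventually (hA.mem_nhds hz)).filter_mono nhdsWithin_le_nhds
  obtain ⟨u, hu, hxu⟩ := (hnear.and self_mem_nhdsWithin).exists
  exact ⟨u, hxu, (Set.mem_smul_set_iff_inv_smul_mem₀ (hx.trans hxu).ne' A z).2 hu⟩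

end SmulSet

section SuprA

variable {A : Set (Fin d → ℝ)}

lemma suprA_nonneg (A : Set (Fin d → ℝ)) (z : Fin d → ℝ) : 0 ≤ suprA A z :=
  Real.sSup_nonneg fun _ hu => hu.1.le

lemma lt_suprA_iff (hopen : IsOpen A) (hstar : StarConvex ℝ 0 Aᶜ)
    (hzero : (0 : Fin d → ℝ) ∉ closure A) {z : Fin d → ℝ} {x : ℝ} (hx : 0 < x) :
    x < suprA A z ↔ z ∈ x • A := by
  constructor
  · intro h
    -- `sSup ∅ = 0` rules out the empty set
    have hne : {u : ℝ | 0 < u ∧ z ∈ u • A}.Nonempty := by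
      by_contra hempty
      rw [suprA, Set.not_nonempty_iff_eq_empty.1 hempty, Real.sSup_empty] at h
      exact h.not_gt hx
    obtain ⟨u, ⟨-, hzu⟩, hxu⟩ := exists_lt_of_lt_csSup hne h
    exact smul_set_subset_of_starConvex_compl hstar hx hxu.le hzu
  · intro h
    obtain ⟨u, hxu, hzu⟩ := exists_gt_mem_smul_set hopen hx h
    exact hxu.trans_le (le_csSup (bddAbove_setOf_mem_smul_set hzero z) ⟨hx.trans hxu, hzu⟩)

lemma lowerSemicontinuous_suprA (hopen : IsOpen A) (hstar : StarConvex ℝ 0 Aᶜ)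
    (hzero : (0 : Fin d → ℝ) ∉ closure A) : LowerSemicontinuous (suprA A) := by
  intro z y hy
  obtain hy_neg | hy_nonneg := lt_or_ge y 0
  · exact Eventually.of_forall fun z' => hy_neg.trans_le (suprA_nonneg A z')
  · obtain ⟨u, hyu, huz⟩ := exists_between hy
    have hu : 0 < u := hy_nonneg.trans_lt hyu
    have hzu : z ∈ u • A := (lt_suprA_iff hopen hstar hzero hu).1 huz
    filter_upwards [(hopen.smul₀ hu.ne').mem_nhds hzu] with z' hz'
    exact hyu.trans ((lt_suprA_iff hopen hstar hzero hu).2 hz')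

lemma aemeasurable_suprA_comp {P : Measure Ω} {X : Ω → Fin d → ℝ} (hopen : IsOpen A)
    (hstar : StarConvex ℝ 0 Aᶜ) (hzero : (0 : Fin d → ℝ) ∉ closure A) (hX : AEMeasurable X P) :
    AEMeasurable (fun ω => suprA A (X ω)) P :=
  (lowerSemicontinuous_suprA hopen hstar hzero).measurable.comp_aemeasurable hX

lemma mTail_FA {P : Measure Ω} {X : Ω → Fin d → ℝ} (hopen : IsOpen A)
    (hstar : StarConvex ℝ 0 Aᶜ) (hzero : (0 : Fin d → ℝ) ∉ closure A) (hX : AEMeasurable X P)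
    {x : ℝ} (hx : 0 < x) : mTail (FA P A X) x = vTail P A X x := by
  rw [mTail, FA, vTail, Measure.map_apply_of_aemeasurable
    (aemeasurable_suprA_comp hopen hstar hzero hX) measurableSet_Ioi]
  congr 2
  ext ω
  exact lt_suprA_iff hopen hstar hzero hx

lemma FA_Iio_zero {P : Measure Ω} {X : Ω → Fin d → ℝ}
    (hY : AEMeasurable (fun ω => suprA A (X ω)) P) : FA P A X (Set.Iio 0) = 0 := by
  have hempty : (fun ω => suprA A (X ω)) ⁻¹' Set.Iio 0 = ∅ :=
    Set.eq_empty_of_forall_notMem fun ω => (suprA_nonneg A (X ω)).not_gt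
  rw [FA, Measure.map_apply_of_aemeasurable hY measurableSet_Iio, hempty, measure_empty]

end SuprA

section AsymptoticEquivalence

open Asymptotics

variable {α : Type*} {l : Filter α}

lemma isEquivalent_comp_div_self {𝕜 : Type*} [NormedField 𝕜] {f g : α → 𝕜} {c : 𝕜} (hc : c ≠ 0)
    (h : Tendsto (fun x => g x / f x) l (𝓝 c)) {φ : α → α} (hφ : Tendsto φ l l) :
    (fun x => g (φ x) / g x) ~[l] (fun x => f (φ x) / f x) := by
  have hlim : Tendsto (fun x => g (φ x) / f (φ x) / (g x / f x)) l (𝓝 1) := by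
    simpa only [Pi.div_def, Function.comp_def, div_self hc] using (h.comp hφ).div h hc
  exact isEquivalent_of_tendsto_one (hlim.congr fun x => div_div_div_comm _ _ _ _)

lemma eventually_le_of_isEquivalent {u v : α → ℝ} (huv : u ~[l] v) {k k' : ℝ} (hk : k < k')
    (hv : ∀ᶠ x in l, v x ≤ k) : ∀ᶠ x in l, u x ≤ k' := by
  obtain ⟨r, hr, hur⟩ := huv.exists_eq_mul
  have hrk : Tendsto (fun x => r x * k) l (𝓝 k) := by simpa only [one_mul] using hr.mul_const k
  filter_upwards [hur, hv, hr.eventually_const_lt one_pos, hrk.eventually_lt_const hk]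
    with x hux hvx hrx hrkx
  calc u x = r x * v x := hux
    _ ≤ r x * k := by gcongr
    _ ≤ k' := hrkx.le

lemma weakTailEquiv_of_tendsto_div {f g : ℝ → ℝ} {c : ℝ} (hc : 0 < c)
    (hg : ∀ᶠ x in atTop, 0 < g x) (h : Tendsto (fun x => f x / g x) atTop (𝓝 c)) :
    WeakTailEquiv f g := by
  refine ⟨c / 2, 2 * c, half_pos hc, ?_⟩
  filter_upwards [hg, h.eventually_const_lt (half_lt_self hc),
    h.eventually_lt_const (show c < 2 * c by linarith)] with x hgx hlo hhi
  exact ⟨((lt_div_iff₀ hgx).1 hlo).le, ((div_lt_iff₀ hgx).1 hhi).le⟩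

end AsymptoticEquivalence

section Tail

variable {μ ν : Measure ℝ}

lemma mTail_eq_measureReal (μ : Measure ℝ) (x : ℝ) : mTail μ x = μ.real (Set.Ioi x) := rfl

lemma mTail_nonneg (μ : Measure ℝ) (x : ℝ) : 0 ≤ mTail μ x := ENNReal.toReal_nonneg

lemma mTail_antitone (μ : Measure ℝ) [IsFiniteMeasure μ] : Antitone (mTail μ) :=
  fun _ _ h => measureReal_mono (Set.Ioi_subset_Ioi h)

lemma tendsto_mTail_atTop (μ : Measure ℝ) [IsFiniteMeasure μ] :
    Tendsto (mTail μ) atTop (𝓝 0) := by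
  have h := tendsto_measure_iInter_atTop (μ := μ)
    (fun x : ℝ => measurableSet_Ioi.nullMeasurableSet (s := Set.Ioi x))
    (fun _ _ hxy => Set.Ioi_subset_Ioi hxy) ⟨0, measure_ne_top μ _⟩
  have hempty : ⋂ x : ℝ, Set.Ioi x = ∅ :=
    Set.eq_empty_of_forall_notMem fun y hy => lt_irrefl y (Set.mem_iInter.1 hy y)
  rw [hempty, measure_empty] at h
  exact (ENNReal.tendsto_toReal ENNReal.zero_ne_top).comp h

/-- Division by zero gives `0`, so a nonzero limit of the quotient forces the tail to be nonzero
arbitrarily far out. -/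
lemma mTail_pos_of_tendsto_div [IsFiniteMeasure μ] {f : ℝ → ℝ} {c : ℝ} (hc : c ≠ 0)
    (h : Tendsto (fun x => f x / mTail μ x) atTop (𝓝 c)) (x : ℝ) : 0 < mTail μ x := by
  obtain ⟨y, hy, hxy⟩ := ((h.eventually_ne hc).and (eventually_ge_atTop x)).exists
  exact ((mTail_nonneg μ y).lt_of_ne' (div_ne_zero_iff.1 hy).2).trans_le (mTail_antitone μ hxy)

lemma measureReal_Icc_zero [IsProbabilityMeasure μ] (h0 : μ (Set.Iio 0) = 0) (v : ℝ) :
    μ.real (Set.Icc 0 v) = 1 - mTail μ v := by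
  have hdiff : Set.Icc 0 v = Set.Iic v \ Set.Iio 0 := by
    rw [Set.sdiff_eq, Set.compl_Iio, Set.inter_comm, Set.Ici_inter_Iic]
  rw [mTail_eq_measureReal, ← probReal_compl_eq_one_sub measurableSet_Ioi, Set.compl_Ioi,
    hdiff, Measure.real, measure_sdiff_null h0, Measure.real]

lemma measureReal_Ioc_eq_mTail_sub [IsFiniteMeasure μ] {a x : ℝ} (hax : a ≤ x) :
    μ.real (Set.Ioc a x) = mTail μ a - mTail μ x := by
  rw [mTail_eq_measureReal, mTail_eq_measureReal, ← Set.Ioc_union_Ioi_eq_Ioi hax,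
    measureReal_union (Set.Ioc_disjoint_Ioi le_rfl) measurableSet_Ioi, add_sub_cancel_right]

lemma mTail_mConv (μ ν : Measure ℝ) (x : ℝ) :
    mTail (mConv μ ν) x = (μ.prod ν).real {p | x < p.1 + p.2} := by
  rw [mTail, mConv, Measure.map_apply (by fun_prop) measurableSet_Ioi]
  rfl

lemma MemL.of_tendsto_div {c : ℝ} (hμ : MemL μ) (hc : c ≠ 0)
    (h : Tendsto (fun x => mTail ν x / mTail μ x) atTop (𝓝 c)) : MemL ν := fun a ha =>
  (isEquivalent_comp_div_self hc h (tendsto_atTop_add_const_right _ (-a) tendsto_id)).symm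
    |>.tendsto_nhds (hμ a ha)

lemma MemD.of_tendsto_div {c : ℝ} (hμ : MemD μ) (hc : c ≠ 0)
    (h : Tendsto (fun x => mTail ν x / mTail μ x) atTop (𝓝 c)) : MemD ν := by
  intro y hy hy1
  obtain ⟨C, hC⟩ := hμ y hy hy1
  exact ⟨C + 1, eventually_le_of_isEquivalent
    (isEquivalent_comp_div_self hc h (tendsto_id.const_mul_atTop hy)) (lt_add_one C) hC⟩

lemma MemPD.of_tendsto_div {c : ℝ} (hμ : MemPD μ) (hc : c ≠ 0)
    (h : Tendsto (fun x => mTail ν x / mTail μ x) atTop (𝓝 c)) : MemPD ν := by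
  intro b hb
  obtain ⟨k, hk, hev⟩ := hμ b hb
  obtain ⟨k', hkk', hk'⟩ := exists_between hk
  exact ⟨k', hk', eventually_le_of_isEquivalent
    (isEquivalent_comp_div_self hc h (tendsto_id.const_mul_atTop (one_pos.trans hb))) hkk' hev⟩

end Tail

section SingleBigJump

open scoped NNReal ENNReal

/-- The event that two numbers both exceed `v` while their sum exceeds `x`. -/
def bothLarge (v x : ℝ) : Set (ℝ × ℝ) := {p | v < p.1 ∧ v < p.2 ∧ x < p.1 + p.2}

/-- The principle of a single big jump: given that the sum of two independent copies is large, both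
summands being large is negligible. The probability that the sum exceeds `x` is replaced by the tail
at `x`, which for subexponential laws has the same order. -/
def HasSingleBigJump (μ : Measure ℝ) : Prop :=
  ∀ ε : ℝ, 0 < ε → ∀ᶠ v in atTop, ∀ᶠ x in atTop,
    (μ.prod μ).real (bothLarge v x) ≤ ε * mTail μ x

variable {μ ν : Measure ℝ} {v x : ℝ}

lemma measurableSet_bothLarge (v x : ℝ) : MeasurableSet (bothLarge v x) :=
  (measurableSet_lt measurable_const measurable_fst).inter
    ((measurableSet_lt measurable_const measurable_snd).inter
      (measurableSet_lt measurable_const (measurable_fst.add measurable_snd)))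

lemma prodMk_preimage_bothLarge (v x a : ℝ) :
    Prod.mk a ⁻¹' bothLarge v x = if v < a then Set.Ioi (max v (x - a)) else ∅ := by
  ext b
  split_ifs with hva <;> simp [bothLarge, hva, sub_lt_iff_lt_add']

lemma prod_bothLarge_comm (μ ν : Measure ℝ) [SFinite μ] [SFinite ν] (v x : ℝ) :
    (μ.prod ν) (bothLarge v x) = (ν.prod μ) (bothLarge v x) := by
  rw [← Measure.prod_swap, Measure.map_apply measurable_swap (measurableSet_bothLarge v x)]
  congr 1
  ext ⟨a, b⟩
  simp only [bothLarge, Set.mem_preimage, Prod.swap_prod_mk, Set.mem_ofPred_eq, add_comm b a,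
    and_left_comm]

lemma prod_bothLarge_le_of_tail_le (ρ : Measure ℝ) [SFinite μ] [SFinite ν] {C : ℝ≥0∞}
    (h : ∀ y, v ≤ y → ν (Set.Ioi y) ≤ C * μ (Set.Ioi y)) (x : ℝ) :
    (ρ.prod ν) (bothLarge v x) ≤ C * (ρ.prod μ) (bothLarge v x) := by
  have hmeas := measurableSet_bothLarge v x
  rw [Measure.prod_apply hmeas, Measure.prod_apply hmeas,
    ← lintegral_const_mul _ (measurable_measure_prodMk_left hmeas)]
  refine lintegral_mono fun a => ?_
  simp only [prodMk_preimage_bothLarge]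
  split_ifs
  · exact h _ (le_max_left _ _)
  · simp only [measure_empty, zero_le]

lemma prod_real_bothLarge_le [IsFiniteMeasure μ] [IsFiniteMeasure ν] {C : ℝ≥0}
    (h : ∀ y, v ≤ y → mTail ν y ≤ C * mTail μ y) (x : ℝ) :
    (ν.prod ν).real (bothLarge v x) ≤ C ^ 2 * (μ.prod μ).real (bothLarge v x) := by
  have htail : ∀ y, v ≤ y → ν (Set.Ioi y) ≤ C * μ (Set.Ioi y) := fun y hy => by
    rw [← ENNReal.toReal_le_toReal (by finiteness) (by finiteness), ENNReal.toReal_mul]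
    exact h y hy
  have hprod : (ν.prod ν) (bothLarge v x) ≤ C ^ 2 * (μ.prod μ) (bothLarge v x) :=
    calc (ν.prod ν) (bothLarge v x)
        ≤ C * (ν.prod μ) (bothLarge v x) := prod_bothLarge_le_of_tail_le ν htail x
      _ = C * (μ.prod ν) (bothLarge v x) := by rw [prod_bothLarge_comm]
      _ ≤ C * (C * (μ.prod μ) (bothLarge v x)) := by
          gcongr
          exact prod_bothLarge_le_of_tail_le μ htail x
      _ = C ^ 2 * (μ.prod μ) (bothLarge v x) := by ring
  simpa only [Measure.real, ENNReal.toReal_mul, ENNReal.toReal_pow, ENNReal.coe_toReal]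
    using ENNReal.toReal_mono (by finiteness) hprod

lemma HasSingleBigJump.of_weakTailEquiv [IsFiniteMeasure μ] [IsFiniteMeasure ν]
    (hμ : HasSingleBigJump μ) (h : WeakTailEquiv (mTail ν) (mTail μ)) : HasSingleBigJump ν := by
  obtain ⟨c₁, c₂, hc₁, hev⟩ := h
  intro ε hε
  set C : ℝ≥0 := c₂.toNNReal
  filter_upwards [hμ (ε * c₁ / (C ^ 2 + 1)) (by positivity), eventually_forall_ge_atTop.2 hev]
    with v hv htails
  have hupper : ∀ y, v ≤ y → mTail ν y ≤ C * mTail μ y := fun y hy =>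
    (htails y hy).2.trans
      (mul_le_mul_of_nonneg_right (Real.le_coe_toNNReal c₂) (mTail_nonneg μ y))
  filter_upwards [hv, hev] with x hx htail
  calc (ν.prod ν).real (bothLarge v x)
      ≤ C ^ 2 * (μ.prod μ).real (bothLarge v x) := prod_real_bothLarge_le hupper x
    _ ≤ C ^ 2 * (ε * c₁ / (C ^ 2 + 1) * mTail μ x) := by gcongr
    _ = C ^ 2 / (C ^ 2 + 1) * (ε * (c₁ * mTail μ x)) := by ring
    _ ≤ 1 * (ε * (c₁ * mTail μ x)) := by
        have := mTail_nonneg μ x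
        gcongr
        exact (div_le_one (by positivity)).2 (by linarith)
    _ ≤ ε * mTail ν x := by
        rw [one_mul]
        gcongr
        exact htail.1

lemma prod_real_bothLarge_add_le_mTail_mConv [IsProbabilityMeasure μ] (h0 : μ (Set.Iio 0) = 0)
    (hvx : v ≤ x) : (μ.prod μ).real (bothLarge v x) + 2 * ((1 - mTail μ v) * mTail μ x) ≤
      mTail (mConv μ μ) x := by
  have hsub : bothLarge v x ∪ Set.Icc 0 v ×ˢ Set.Ioi x ∪ Set.Ioi x ×ˢ Set.Icc 0 v ⊆
      {p : ℝ × ℝ | x < p.1 + p.2} := by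
    rintro ⟨p, q⟩ ((⟨-, -, h⟩ | ⟨⟨hp, -⟩, hq⟩) | ⟨hp, ⟨hq, -⟩⟩)
    · exact h
    · exact lt_add_of_nonneg_of_lt hp hq
    · exact lt_add_of_lt_of_nonneg hp hq
  have hdisj₁ : Disjoint (bothLarge v x) (Set.Icc 0 v ×ˢ Set.Ioi x) :=
    Set.disjoint_left.2 fun _ h h' => h.1.not_ge h'.1.2
  have hdisj₂ : Disjoint (bothLarge v x ∪ Set.Icc 0 v ×ˢ Set.Ioi x)
      (Set.Ioi x ×ˢ Set.Icc 0 v) := by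
    refine Set.disjoint_left.2 ?_
    rintro _ (h | h) h'
    · exact h.2.1.not_ge h'.2.2
    · exact (h.1.2.trans hvx).not_gt h'.1
  have hmono := measureReal_mono (μ := μ.prod μ) hsub
  rw [← mTail_mConv, measureReal_union hdisj₂ (measurableSet_Ioi.prod measurableSet_Icc),
    measureReal_union hdisj₁ (measurableSet_Icc.prod measurableSet_Ioi), measureReal_prod_prod,
    measureReal_prod_prod, measureReal_Icc_zero h0, ← mTail_eq_measureReal] at hmono
  linarith

lemma mTail_mConv_le_prod_real_bothLarge_add (μ : Measure ℝ) [IsProbabilityMeasure μ] (v x : ℝ) :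
    mTail (mConv μ μ) x ≤ (μ.prod μ).real (bothLarge v x) + 2 * mTail μ (x - v) := by
  have hsub : {p : ℝ × ℝ | x < p.1 + p.2} ⊆
      bothLarge v x ∪ (Set.univ ×ˢ Set.Ioi (x - v) ∪ Set.Ioi (x - v) ×ˢ Set.univ) := by
    rintro ⟨p, q⟩ (hpq : x < p + q)
    obtain hp | hp := lt_or_ge v p
    · obtain hq | hq := lt_or_ge v q
      · exact Or.inl ⟨hp, hq, hpq⟩
      · exact Or.inr (Or.inr ⟨show x - v < p by linarith, trivial⟩)
    · exact Or.inr (Or.inl ⟨trivial, show x - v < q by linarith⟩)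
  calc mTail (mConv μ μ) x
      ≤ (μ.prod μ).real (bothLarge v x) + ((μ.prod μ).real (Set.univ ×ˢ Set.Ioi (x - v)) +
          (μ.prod μ).real (Set.Ioi (x - v) ×ˢ Set.univ)) := by
        rw [mTail_mConv]
        exact (measureReal_mono hsub).trans <| (measureReal_union_le _ _).trans <|
          add_le_add_right (measureReal_union_le _ _) _
    _ = (μ.prod μ).real (bothLarge v x) + 2 * mTail μ (x - v) := by
        rw [measureReal_prod_prod, measureReal_prod_prod, probReal_univ, ← mTail_eq_measureReal]
        ring

lemma mTail_mul_le_prod_real_bothLarge [IsFiniteMeasure μ] {a : ℝ} (ha : 0 ≤ a)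
    (hax : a ≤ x - a) :
    (mTail μ a - mTail μ x) * mTail μ (x - a) + mTail μ x * mTail μ a ≤
      (μ.prod μ).real (bothLarge a x) := by
  have hsub : Set.Ioc a x ×ˢ Set.Ioi (x - a) ∪ Set.Ioi x ×ˢ Set.Ioi a ⊆ bothLarge a x := by
    rintro ⟨p, q⟩ (⟨⟨hp, -⟩, hq⟩ | ⟨hp, hq⟩) <;>
      simp only [Set.mem_Ioi] at hp hq <;>
      exact ⟨by linarith, by linarith, by linarith⟩
  have hdisj : Disjoint (Set.Ioc a x ×ˢ Set.Ioi (x - a)) (Set.Ioi x ×ˢ Set.Ioi a) :=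
    Set.disjoint_prod.2 (Or.inl (Set.Ioc_disjoint_Ioi le_rfl))
  have hmono := measureReal_mono (μ := μ.prod μ) hsub
  rwa [measureReal_union hdisj (measurableSet_Ioi.prod measurableSet_Ioi), measureReal_prod_prod,
    measureReal_prod_prod, measureReal_Ioc_eq_mTail_sub (by linarith),
    ← mTail_eq_measureReal, ← mTail_eq_measureReal, ← mTail_eq_measureReal] at hmono

lemma MemS.hasSingleBigJump [IsProbabilityMeasure μ] (h0 : μ (Set.Iio 0) = 0) (hμ : MemS μ) :
    HasSingleBigJump μ := by
  intro ε hε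
  have hsmall : ∀ᶠ v in atTop, mTail μ v < ε / 2 :=
    (tendsto_mTail_atTop μ).eventually_lt_const (half_pos hε)
  filter_upwards [hsmall] with v hv
  have hratio : ∀ᶠ x in atTop,
      mTail (mConv μ μ) x / mTail μ x < 2 * (1 - mTail μ v) + ε :=
    Tendsto.eventually_lt_const (by linarith) hμ
  filter_upwards [hratio, eventually_ge_atTop v] with x hx hvx
  have hconv := (div_lt_iff₀ (mTail_pos_of_tendsto_div two_ne_zero hμ x)).1 hx
  linarith [prod_real_bothLarge_add_le_mTail_mConv h0 hvx]

lemma MemS.memL [IsProbabilityMeasure μ] (h0 : μ (Set.Iio 0) = 0) (hμ : MemS μ) : MemL μ := by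
  intro a ha
  have hpos := mTail_pos_of_tendsto_div two_ne_zero hμ
  have hlower : ∀ x, 1 ≤ mTail μ (x - a) / mTail μ x := fun x =>
    (one_le_div (hpos x)).2 (mTail_antitone μ (sub_le_self x ha.le))
  have hupper : ∀ᶠ x in atTop, mTail μ (x - a) / mTail μ x ≤
      (mTail (mConv μ μ) x / mTail μ x - (2 - mTail μ a)) / (mTail μ a - mTail μ x) := by
    filter_upwards [eventually_ge_atTop (2 * a),
      (tendsto_mTail_atTop μ).eventually_lt_const (hpos a)] with x hx hxa
    have hconv : (mTail μ a - mTail μ x) * mTail μ (x - a) ≤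
        mTail (mConv μ μ) x - (2 - mTail μ a) * mTail μ x := by
      linarith [mTail_mul_le_prod_real_bothLarge (μ := μ) ha.le (show a ≤ x - a by linarith),
        prod_real_bothLarge_add_le_mTail_mConv h0 (show a ≤ x by linarith)]
    rw [le_div_iff₀ (sub_pos.2 hxa), div_mul_eq_mul_div, div_le_iff₀ (hpos x), sub_mul,
      div_mul_cancel₀ _ (hpos x).ne']
    linarith
  have hlim : Tendsto (fun x =>
      (mTail (mConv μ μ) x / mTail μ x - (2 - mTail μ a)) / (mTail μ a - mTail μ x))
      atTop (𝓝 1) := by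
    have hquot := (Tendsto.sub_const hμ (2 - mTail μ a)).div
      ((tendsto_mTail_atTop μ).const_sub (mTail μ a)) (by simpa only [sub_zero] using (hpos a).ne')
    rwa [sub_sub_cancel, sub_zero, div_self (hpos a).ne'] at hquot
  exact tendsto_of_tendsto_of_tendsto_of_le_of_le' tendsto_const_nhds hlim
    (Eventually.of_forall hlower) hupper

lemma MemL.memS [IsProbabilityMeasure μ] (h0 : μ (Set.Iio 0) = 0) (hL : MemL μ)
    (hJ : HasSingleBigJump μ) : MemS μ := by
  have hpos := mTail_pos_of_tendsto_div one_ne_zero (hL 1 one_pos)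
  refine tendsto_order.2 ⟨fun a ha => ?_, fun a ha => ?_⟩
  · obtain ⟨v, hv⟩ := ((tendsto_mTail_atTop μ).eventually_lt_const
      (show 0 < (2 - a) / 2 by linarith)).exists
    filter_upwards [eventually_ge_atTop v] with x hvx
    rw [lt_div_iff₀ (hpos x)]
    calc a * mTail μ x < 2 * (1 - mTail μ v) * mTail μ x :=
          mul_lt_mul_of_pos_right (by linarith) (hpos x)
      _ ≤ mTail (mConv μ μ) x := by
          linarith [prod_real_bothLarge_add_le_mTail_mConv h0 hvx,
            measureReal_nonneg (μ := μ.prod μ) (s := bothLarge v x)]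
  · obtain ⟨v, hv0, hv⟩ :=
      ((eventually_gt_atTop 0).and (hJ ((a - 2) / 2) (by linarith))).exists
    have hshift : ∀ᶠ x in atTop, mTail μ (x - v) / mTail μ x < (a + 2) / 4 :=
      (hL v hv0).eventually_lt_const (by linarith)
    filter_upwards [hv, hshift] with x hx hxv
    rw [div_lt_iff₀ (hpos x)] at hxv ⊢
    linarith [mTail_mConv_le_prod_real_bothLarge_add μ v x]

lemma MemS.of_tendsto_div [IsProbabilityMeasure μ] [IsProbabilityMeasure ν] {c : ℝ} (hμ : MemS μ)
    (hμ0 : μ (Set.Iio 0) = 0) (hν0 : ν (Set.Iio 0) = 0) (hc : 0 < c)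
    (h : Tendsto (fun x => mTail ν x / mTail μ x) atTop (𝓝 c)) : MemS ν :=
  have hpos : ∀ᶠ x in atTop, 0 < mTail μ x :=
    Eventually.of_forall (mTail_pos_of_tendsto_div hc.ne' h)
  ((hμ.memL hμ0).of_tendsto_div hc.ne' h).memS hν0
    ((hμ.hasSingleBigJump hμ0).of_weakTailEquiv (weakTailEquiv_of_tendsto_div hc hpos h))

end SingleBigJump

theorem statement2_general {Ω₁ Ω₂ : Type*} [MeasurableSpace Ω₁] [MeasurableSpace Ω₂]
    (P₁ : Measure Ω₁) (P₂ : Measure Ω₂) [IsProbabilityMeasure P₁] [IsProbabilityMeasure P₂]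
    {A : Set (Fin d → ℝ)} (hopen : IsOpen A) (hstar : StarConvex ℝ 0 Aᶜ)
    (hzero : (0 : Fin d → ℝ) ∉ closure A) {X₁ : Ω₁ → Fin d → ℝ} {X₂ : Ω₂ → Fin d → ℝ}
    (hX₁ : AEMeasurable X₁ P₁) (hX₂ : AEMeasurable X₂ P₂) {c : ℝ} (hc : 0 < c)
    (hequiv : Tendsto (fun x => vTail P₂ A X₂ x / vTail P₁ A X₁ x) atTop (𝓝 c)) :
    (MemPD (FA P₁ A X₁) → MemPD (FA P₂ A X₂)) ∧
    (MemT (FA P₁ A X₁) → MemT (FA P₂ A X₂)) ∧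
    (MemA (FA P₁ A X₁) → MemA (FA P₂ A X₂)) ∧
    (MemD (FA P₁ A X₁) ∧ MemPD (FA P₁ A X₁) → MemD (FA P₂ A X₂) ∧ MemPD (FA P₂ A X₂)) ∧
    (MemD (FA P₁ A X₁) ∧ MemA (FA P₁ A X₁) → MemD (FA P₂ A X₂) ∧ MemA (FA P₂ A X₂)) := by
  have hY₁ := aemeasurable_suprA_comp hopen hstar hzero hX₁
  have hY₂ := aemeasurable_suprA_comp hopen hstar hzero hX₂
  have : IsProbabilityMeasure (FA P₁ A X₁) := Measure.isProbabilityMeasure_map hY₁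
  have : IsProbabilityMeasure (FA P₂ A X₂) := Measure.isProbabilityMeasure_map hY₂
  have h : Tendsto (fun x => mTail (FA P₂ A X₂) x / mTail (FA P₁ A X₁) x) atTop (𝓝 c) := by
    refine hequiv.congr' ?_
    filter_upwards [eventually_gt_atTop 0] with x hx
    rw [mTail_FA hopen hstar hzero hX₁ hx, mTail_FA hopen hstar hzero hX₂ hx]
  have hL (hμ : MemL (FA P₁ A X₁)) : MemL (FA P₂ A X₂) := hμ.of_tendsto_div hc.ne' h
  have hD (hμ : MemD (FA P₁ A X₁)) : MemD (FA P₂ A X₂) := hμ.of_tendsto_div hc.ne' h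
  have hPD (hμ : MemPD (FA P₁ A X₁)) : MemPD (FA P₂ A X₂) := hμ.of_tendsto_div hc.ne' h
  have hS (hμ : MemS (FA P₁ A X₁)) : MemS (FA P₂ A X₂) :=
    hμ.of_tendsto_div (FA_Iio_zero hY₁) (FA_Iio_zero hY₂) hc h
  exact ⟨hPD, And.imp hL hPD, And.imp hS hPD, And.imp hD hPD, And.imp hD (And.imp hS hPD)⟩

/-- Closure of the classes `𝓟𝓓_A, 𝓣_A, 𝓐_A, (𝓓∩𝓟𝓓)_A, (𝓓∩𝓐)_A`
with respect to strong tail-equivalence on `A`. -/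
theorem statement2 (P : Measure Ω) [IsProbabilityMeasure P]
    (A : Set (Fin d → ℝ)) (hA : IsRSet d A)
    (X₁ X₂ : Ω → Fin d → ℝ) (hX₁ : Measurable X₁) (hX₂ : Measurable X₂)
    (c : ℝ) (hc : 0 < c)
    (hequiv : Tendsto (fun x => vTail P A X₂ x / vTail P A X₁ x) atTop (𝓝 c)) :
    (MemPD (FA P A X₁) → MemPD (FA P A X₂)) ∧
    (MemT (FA P A X₁) → MemT (FA P A X₂)) ∧
    (MemA (FA P A X₁) → MemA (FA P A X₂)) ∧
    (MemD (FA P A X₁) ∧ MemPD (FA P A X₁) → MemD (FA P A X₂) ∧ MemPD (FA P A X₂)) ∧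
    (MemD (FA P A X₁) ∧ MemA (FA P A X₁) → MemD (FA P A X₂) ∧ MemA (FA P A X₂)) :=
  have hzero : (0 : Fin d → ℝ) ∈ Aᶜ := fun h => hA.zero_notMem_closure (subset_closure h)
  statement2_general P P hA.isOpen (hA.convex_compl.starConvex hzero) hA.zero_notMem_closure
    hX₁.aemeasurable hX₂.aemeasurable hc hequiv

end Paper
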